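/- Let $m\ge 1$ be an integer, $M=\{1,\dots,m\}$, let $h_1\ge h_2\ge\dots\ge h_m\ge 0$ be reals, let $\pi_1,\dots,\pi_m>0$ with $\sum_{i=1}^m\pi_i=1$, and let $\varepsilon\in[0,1)$ with $\pi_i\le\varepsilon$ for all $i\in M$. Put $p=\max\{k\in M:\sum_{i=1}^k\pi_i\le\varepsilon\}$ and $F_j=\sum_{i=1}^j\pi_i$ for $j\in M$. Let $$\mathcal F_c=\Big\{(z,x)\in\mathbb R_{\ge0}\times\{0,1\}^m:\ x_i=0\Rightarrow z\ge h_i\ (i\in M),\ \sum_{i=1}^m\pi_ix_i\le\varepsilon\Big\},$$ and let $\mathcal S_c$ be the set of all $(z,x;y)$ with $z\ge 0$, $x\in[0,1]^m$, $\sum_{i=1}^m\pi_ix_i\le\varepsilon$, $y\in\mathbb Z_{\ge0}^m$, $\sum_{i=1}^m y_i\le1$, and $$(1-x_i)\Big(1-\sum_{k=1}^m y_k\Big)=0,\quad zy_i-h_iy_i\ge0,\quad -x_iy_i\ge0\quad(i\in M),\qquad -(1-x_i)y_j\ge0\quad(i,j\in M,\ i<j).$$ Let $r\in\{1,\dots,p\}$,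 $l\in\{1,\dots,r\}$, $L=\{1,\dots,l\}$, and let $1\le t_1<\dots<t_l\le r$, with the convention $t_{l+1}:=r+1$. Let $v\in\{1,\dots,p-r+l\}$, $V=\{1,\dots,v\}$, and let $r+1\le q_1<\dots<q_v\le m$. Let $\delta_{t_\iota}\in\mathbb R$ for $\iota\in L$ satisfy $\delta_{t_\iota}\ge h_{t_{\iota+1}}-h_{t_\iota}$ for every $\iota\in L$ and $\sum_{\iota\in L}\delta_{t_\iota}\le h_{r+1}$. For $j\in M$ let $a_j=|\{\iota\in L:t_\iota<j\}|$ and choose a subset $A_j\subseteq V$. Suppose there exist nonnegative reals $\phi_{q_1},\dots,\phi_{q_v}$ and, for each $j\in M$, a nonnegative real $\beta_j$ such that for every $j\in M$: (i) $\phi_{q_\iota}\le m\,\pi_{q_\iota}\beta_j$ for every $\iota\in A_j$ with $q_\iota>j$, and $m\,\pi_{q_\iota}\beta_j\le\phi_{q_\iota}$ for every $\iota\in V\setminus A_j$ with $q_\iota>j$; and (ii) $$\beta_j\Big(F_j-\pi_j-\varepsilon+\sum_{\iota\in V:\,q_\iota>j}\pi_{q_\iota}-\sum_{\iota\in A_j:\,q_\iota>j}\pi_{q_\iota}\Big)\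 \ge\ \frac1m\Big(h_{t_{a_j+1}}-h_j-\sum_{\iota\in L:\,t_\iota<j}\delta_{t_\iota}-[j\in\{q_1,\dots,q_v\}]\,\phi_j-\sum_{\iota\in A_j:\,q_\iota>j}\phi_{q_\iota}\Big),$$ where $[j\in\{q_1,\dots,q_v\}]$ is $1$ if $j$ equals some $q_\iota$ and $0$ otherwise, and $\phi_j$ denotes $\phi_{q_\iota}$ for the $\iota$ with $q_\iota=j$. Then the BL&P inequality $$z+\sum_{\iota=1}^l(h_{t_\iota}-h_{t_{\iota+1}}+\delta_{t_\iota})\,x_{t_\iota}+\sum_{\iota=1}^v\phi_{q_\iota}(1-x_{q_\iota})\ \ge\ h_{t_1}$$ is valid for $\operatorname{proj}_{(z,x)}\operatorname{conv}(\mathcal S_c)$, that is, it holds for every $(z,x)$ such that $(z,x;y)\in\operatorname{conv}(\mathcal S_c)$ for some $y\in\mathbb R^m$, and it is valid for $\operatorname{conv}(\mathcal F_c)$, that is, it holds for every $(z,x)\in\operatorname{conv}(\mathcal F_c)$. -/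

import Mathlib

/-!
Index convention: the index set `M = {1, …, m}` is represented by `Fin m`, so that the element
`i : Fin m` stands for the index `i.val + 1`.
-/

/-- The mixing set with a knapsack constraint: `z ≥ 0`, `x ∈ {0,1}^m`, `x_i = 0` implies
`z ≥ h_i`, and `∑ π_i x_i ≤ ε`. -/
def mixingKnapsackSet {m : ℕ} (h π : Fin m → ℝ) (ε : ℝ) : Set (ℝ × (Fin m → ℝ)) :=
  {w | 0 ≤ w.1 ∧ (∀ i, w.2 i = 0 ∨ w.2 i = 1) ∧ (∀ i, w.2 i = 0 → h i ≤ w.1) ∧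
    ∑ i, π i * w.2 i ≤ ε}

/-- The set `Ξ_c`: `z ≥ 0`, `0 ≤ x ≤ 1`, and `∑ π_i x_i ≤ ε`. -/
def relaxedKnapsackSet {m : ℕ} (π : Fin m → ℝ) (ε : ℝ) : Set (ℝ × (Fin m → ℝ)) :=
  {w | 0 ≤ w.1 ∧ (∀ i, 0 ≤ w.2 i) ∧ (∀ i, w.2 i ≤ 1) ∧ ∑ i, π i * w.2 i ≤ ε}

/-- The set `Δ_m` of vectors with nonnegative integer entries whose sum is at most one. -/
def integerSimplex (m : ℕ) : Set (Fin m → ℝ) :=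
  {y | (∀ i, ∃ n : ℕ, y i = n) ∧ ∑ i, y i ≤ 1}

/-- The bilinear set `S_c` of all `((z, x), y) ∈ Ξ_c × Δ_m` that satisfy the five families of
bilinear constraints. -/
def bilinearMixingSet {m : ℕ} (h π : Fin m → ℝ) (ε : ℝ) :
    Set ((ℝ × (Fin m → ℝ)) × (Fin m → ℝ)) :=
  {w | w.1 ∈ relaxedKnapsackSet π ε ∧ w.2 ∈ integerSimplex m ∧
    (∀ i, 0 ≤ (1 - w.1.2 i) * (1 - ∑ k, w.2 k)) ∧
    (∀ i, 0 ≤ -((1 - w.1.2 i) * (1 - ∑ k, w.2 k))) ∧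
    (∀ i, 0 ≤ w.1.1 * w.2 i - h i * w.2 i) ∧
    (∀ i, 0 ≤ -(w.1.2 i * w.2 i)) ∧
    (∀ i j, i < j → 0 ≤ -((1 - w.1.2 i) * w.2 j))}

/-- The number `a_j` of indices `ι ∈ {1, …, l}` with `t_ι < j`. Here `t : Fin (l + 1) → Fin m`
lists `t_1, …, t_l, t_{l+1}`; only the first `l` entries are counted. -/
def countBelow {m l : ℕ} (t : Fin (l + 1) → Fin m) (j : Fin m) : ℕ :=
  (Finset.univ.filter fun ι : Fin l => t ι.castSucc < j).card

theorem countBelow_lt {m l : ℕ} (t : Fin (l + 1) → Fin m) (j : Fin m) :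
    countBelow t j < l + 1 :=
  Nat.lt_succ_of_le ((Finset.card_filter_le _ _).trans (by simp))

/-- The BL&P inequality
`z + ∑_ι (h_{t_ι} - h_{t_{ι+1}} + δ_{t_ι}) x_{t_ι} + ∑_ι φ_{q_ι} (1 - x_{q_ι}) ≥ h_{t_1}`
at the point `w = (z, x)`; `δ ι` stands for `δ_{t_ι}` and `φ ι` for `φ_{q_ι}`. -/
def BLPInequality {m l v : ℕ} (h : Fin m → ℝ) (t : Fin (l + 1) → Fin m) (δ : Fin l → ℝ)
    (q : Fin v → Fin m) (φ : Fin v → ℝ) (w : ℝ × (Fin m → ℝ)) : Prop :=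
  w.1 + (∑ ι : Fin l, (h (t ι.castSucc) - h (t ι.succ) + δ ι) * w.2 (t ι.castSucc))
    + (∑ ι : Fin v, φ ι * (1 - w.2 (q ι))) ≥ h (t 0)

/-!
Both sets consist of points whose first coordinate different from one is a zero, in some position
`j`, with `z ≥ h_j`. At such a point the terms with `t_ι < j` telescope to
`h_{t_1} - h_{t_{a_j + 1}}` plus the `δ_{t_ι}` with `t_ι < j`, and the later ones are nonnegative.
Since `x_i = 1` for `i < j`, the knapsack constraint leaves the capacity `ε - F_j + π_j` to the
`q_ι > j`, and by weak duality the cost `∑ φ_{q_ι} (1 - x_{q_ι})` over these `ι` is at least the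
value of the dual solution with multiplier `m β_j`, which is where conditions (i) and (ii) enter.
As the inequality is affine, it passes to convex hulls and their projections.
-/

section Telescoping

theorem mem_iff_val_lt_card_of_isLowerSet {l : ℕ} {s : Finset (Fin l)}
    (hs : IsLowerSet (s : Set (Fin l))) (i : Fin l) : i ∈ s ↔ i.val < s.card := by
  constructor
  · intro hi
    have hsub : Finset.Iic i ⊆ s := fun k hk => hs (Finset.mem_Iic.1 hk) hi
    simpa using Finset.card_le_card hsub
  · contrapose!
    intro hi
    have hsub : s ⊆ Finset.Iio i := fun k hk =>
      Finset.mem_Iio.2 (lt_of_not_ge fun hik => hi (hs hik hk))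
    simpa using Finset.card_le_card hsub

variable {G : Type*} [AddCommGroup G]

theorem sum_castSucc_sub_succ_filter_val_lt {l : ℕ} (g : Fin (l + 1) → G) {a : ℕ}
    (ha : a < l + 1) :
    ∑ ι with (ι : Fin l).val < a, (g ι.castSucc - g ι.succ) = g 0 - g ⟨a, ha⟩ := by
  induction a with
  | zero => simp
  | succ a ih =>
    have hfilter : ({ι | ι.val < a + 1} : Finset (Fin l))
        = insert ⟨a, by lia⟩ ({ι | ι.val < a} : Finset (Fin l)) := by
      ext ι
      simp only [Finset.mem_filter, Finset.mem_univ, true_and, Finset.mem_insert, Fin.ext_iff]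
      lia
    rw [hfilter, Finset.sum_insert (by simp), ih (by lia), add_comm]
    exact sub_add_sub_cancel _ _ _

theorem sum_castSucc_sub_succ_filter_lt {m l : ℕ} {t : Fin (l + 1) → Fin m} (ht : Monotone t)
    (g : Fin m → G) (j : Fin m) :
    ∑ ι : Fin l with t ι.castSucc < j, (g (t ι.castSucc) - g (t ι.succ))
      = g (t 0) - g (t ⟨countBelow t j, countBelow_lt t j⟩) := by
  have hlower : IsLowerSet (({ι | t ι.castSucc < j} : Finset (Fin l)) : Set (Fin l)) := by
    intro a b hba ha
    rw [Finset.mem_coe, Finset.mem_filter_univ] at ha ⊢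
    exact (ht (Fin.castSucc_le_castSucc_iff.2 hba)).trans_lt ha
  have hfilter : ({ι | t ι.castSucc < j} : Finset (Fin l))
      = ({ι | ι.val < countBelow t j} : Finset (Fin l)) := by
    ext ι
    rw [mem_iff_val_lt_card_of_isLowerSet hlower, Finset.mem_filter_univ, countBelow]
  rw [hfilter]
  exact sum_castSucc_sub_succ_filter_val_lt (fun i => g (t i)) (countBelow_lt t j)

end Telescoping

section OrderedRing

variable {R : Type*} [CommRing R] [PartialOrder R] [IsOrderedRing R]

/-- This is weak duality for the continuous knapsack problem of minimizing `∑ φ_i (1 - x_i)`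
subject to `∑ c_i x_i ≤ K` and `0 ≤ x ≤ 1`, with multiplier `b` for the knapsack constraint. -/
theorem sum_add_mul_sub_le_sum_mul_one_sub {ι : Type*} {s A : Finset ι} (hAs : A ⊆ s)
    {c φ x : ι → R} {b K : R} (hb : 0 ≤ b) (hx0 : ∀ i ∈ s, 0 ≤ x i) (hx1 : ∀ i ∈ s, x i ≤ 1)
    (hA : ∀ i ∈ A, φ i ≤ c i * b) (hAc : ∀ i ∈ s, i ∉ A → c i * b ≤ φ i)
    (hK : ∑ i ∈ s, c i * x i ≤ K) :
    ∑ i ∈ A, φ i + b * (∑ i ∈ s, c i - K - ∑ i ∈ A, c i) ≤ ∑ i ∈ s, φ i * (1 - x i) := by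
  classical
  have hin : ∀ i ∈ A, c i * b * (1 - x i) - (c i * b - φ i) ≤ φ i * (1 - x i) := fun i hi => by
    linear_combination mul_le_mul_of_nonneg_right (hA i hi) (hx0 i (hAs hi))
  have hout : ∀ i ∈ s \ A, c i * b * (1 - x i) ≤ φ i * (1 - x i) := fun i hi => by
    obtain ⟨his, hiA⟩ := Finset.mem_sdiff.1 hi
    exact mul_le_mul_of_nonneg_right (hAc i his hiA) (sub_nonneg.2 (hx1 i his))
  have hprice : ∑ i ∈ s, c i * b * (1 - x i) = b * (∑ i ∈ s, c i - ∑ i ∈ s, c i * x i) := by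
    rw [← Finset.sum_sub_distrib, Finset.mul_sum]
    exact Finset.sum_congr rfl fun i _ => by ring
  calc ∑ i ∈ A, φ i + b * (∑ i ∈ s, c i - K - ∑ i ∈ A, c i)
      ≤ ∑ i ∈ s, c i * b * (1 - x i) - ∑ i ∈ A, (c i * b - φ i) := by
        rw [hprice, Finset.sum_sub_distrib, ← Finset.sum_mul]
        linear_combination mul_le_mul_of_nonneg_left hK hb
    _ = ∑ i ∈ s \ A, c i * b * (1 - x i)
          + ∑ i ∈ A, (c i * b * (1 - x i) - (c i * b - φ i)) := by
        rw [← Finset.sum_sdiff hAs, add_sub_assoc, ← Finset.sum_sub_distrib]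
    _ ≤ ∑ i ∈ s \ A, φ i * (1 - x i) + ∑ i ∈ A, φ i * (1 - x i) :=
        add_le_add (Finset.sum_le_sum hout) (Finset.sum_le_sum hin)
    _ = ∑ i ∈ s, φ i * (1 - x i) := Finset.sum_sdiff hAs

theorem sum_Iio_add_sum_filter_lt_le_sum_mul {α κ : Type*} [Fintype α] [Preorder α]
    [LocallyFiniteOrderBot α] [DecidableLT α] [Fintype κ] {π x : α → R} (hπ : ∀ i, 0 ≤ π i)
    (hx0 : ∀ i, 0 ≤ x i) {q : κ → α} (hq : Function.Injective q) {j : α}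
    (hx1 : ∀ i < j, x i = 1) :
    ∑ i ∈ Finset.Iio j, π i + ∑ ι with j < q ι, π (q ι) * x (q ι) ≤ ∑ i, π i * x i := by
  have hlow : ∑ i ∈ Finset.Iio j, π i = ∑ i ∈ Finset.Iio j, π i * x i :=
    Finset.sum_congr rfl fun i hi => by rw [hx1 i (Finset.mem_Iio.1 hi), mul_one]
  have hhigh : ∑ ι with j < q ι, π (q ι) * x (q ι)
      = ∑ i ∈ ({ι | j < q ι} : Finset κ).map ⟨q, hq⟩, π i * x i :=
    (Finset.sum_map _ ⟨q, hq⟩ fun i => π i * x i).symm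
  have hdisj : Disjoint (Finset.Iio j) (({ι | j < q ι} : Finset κ).map ⟨q, hq⟩) := by
    rw [Finset.disjoint_left]
    rintro _ hi hmem
    obtain ⟨ι, hι, rfl⟩ := Finset.mem_map.1 hmem
    exact lt_asymm (Finset.mem_Iio.1 hi) ((Finset.mem_filter_univ ι).1 hι)
  rw [hlow, hhigh, ← Finset.sum_disjUnion hdisj]
  exact Finset.sum_le_sum_of_subset_of_nonneg (Finset.subset_univ _)
    fun i _ _ => mul_nonneg (hπ i) (hx0 i)

theorem sum_filter_eq_add_sum_filter_lt_le {α κ : Type*} [Preorder α] [DecidableEq α]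
    [DecidableLT α] [Fintype κ] {q : κ → α} {φ : κ → R} (hφ : ∀ ι, 0 ≤ φ ι) {x : α → R}
    (hx1 : ∀ i, x i ≤ 1) {j : α} (hxj : x j = 0) :
    ∑ ι with q ι = j, φ ι + ∑ ι with j < q ι, φ ι * (1 - x (q ι))
      ≤ ∑ ι, φ ι * (1 - x (q ι)) := by
  classical
  have heq : ∑ ι with q ι = j, φ ι = ∑ ι with q ι = j, φ ι * (1 - x (q ι)) :=
    Finset.sum_congr rfl fun ι hι => by
      rw [(Finset.mem_filter_univ ι).1 hι, hxj, sub_zero, mul_one]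
  have hdisj : Disjoint ({ι | q ι = j} : Finset κ) ({ι | j < q ι} : Finset κ) :=
    Finset.disjoint_filter.2 fun ι _ hι => hι.not_gt
  rw [heq, ← Finset.sum_union hdisj]
  exact Finset.sum_le_sum_of_subset_of_nonneg (Finset.subset_univ _) fun ι _ _ =>
    mul_nonneg (hφ ι) (sub_nonneg.2 (hx1 _))

theorem sub_add_sum_filter_lt_le_sum_mul {m l : ℕ} {h : Fin m → R} {t : Fin (l + 1) → Fin m}
    (ht : Monotone t) {δ : Fin l → R} (hδ : ∀ ι, h (t ι.succ) - h (t ι.castSucc) ≤ δ ι)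
    {x : Fin m → R} (hx0 : ∀ i, 0 ≤ x i) {j : Fin m} (hx1 : ∀ i < j, x i = 1) :
    h (t 0) - h (t ⟨countBelow t j, countBelow_lt t j⟩) + ∑ ι with t ι.castSucc < j, δ ι
      ≤ ∑ ι, (h (t ι.castSucc) - h (t ι.succ) + δ ι) * x (t ι.castSucc) := by
  rw [← sum_castSucc_sub_succ_filter_lt ht h j, ← Finset.sum_add_distrib]
  calc ∑ ι with t ι.castSucc < j, (h (t ι.castSucc) - h (t ι.succ) + δ ι)
      = ∑ ι with t ι.castSucc < j,
          (h (t ι.castSucc) - h (t ι.succ) + δ ι) * x (t ι.castSucc) :=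
        Finset.sum_congr rfl fun ι hι => by
          rw [hx1 _ ((Finset.mem_filter_univ ι).1 hι), mul_one]
    _ ≤ ∑ ι, (h (t ι.castSucc) - h (t ι.succ) + δ ι) * x (t ι.castSucc) :=
        Finset.sum_le_sum_of_subset_of_nonneg (Finset.subset_univ _) fun ι _ _ =>
          mul_nonneg (by linear_combination hδ ι) (hx0 _)

end OrderedRing

/-- The set of points of `Ξ_c` whose first coordinate different from one is a zero, in some
position `j`, and satisfies `h_j ≤ z`. It contains both `mixingKnapsackSet` and the projection of
`bilinearMixingSet`. The coordinates after `j` may be fractional. -/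
def firstZeroSet {m : ℕ} (h π : Fin m → ℝ) (ε : ℝ) : Set (ℝ × (Fin m → ℝ)) :=
  {w | w ∈ relaxedKnapsackSet π ε ∧ ∃ j, h j ≤ w.1 ∧ w.2 j = 0 ∧ ∀ i < j, w.2 i = 1}

section FirstZero

variable {m : ℕ} {h π : Fin m → ℝ} {ε : ℝ}

theorem exists_ne_one_of_mem_relaxedKnapsackSet (hε : ε < ∑ i, π i) {w : ℝ × (Fin m → ℝ)}
    (hw : w ∈ relaxedKnapsackSet π ε) : ∃ i, w.2 i ≠ 1 := by
  by_contra! hone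
  have hknap := hw.2.2.2
  simp only [hone, mul_one] at hknap
  exact hε.not_ge hknap

theorem mixingKnapsackSet_subset_relaxedKnapsackSet :
    mixingKnapsackSet h π ε ⊆ relaxedKnapsackSet π ε := by
  rintro w ⟨hz, hx, -, hknap⟩
  refine ⟨hz, fun i => ?_, fun i => ?_, hknap⟩ <;> rcases hx i with hi | hi <;> simp [hi]

theorem mixingKnapsackSet_subset_firstZeroSet (hε : ε < ∑ i, π i) :
    mixingKnapsackSet h π ε ⊆ firstZeroSet h π ε := by
  intro w hw
  have hrel := mixingKnapsackSet_subset_relaxedKnapsackSet hw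
  obtain ⟨j, hj, hmin⟩ := WellFounded.has_min (wellFounded_lt (α := Fin m)) {i | w.2 i ≠ 1}
    (exists_ne_one_of_mem_relaxedKnapsackSet hε hrel)
  have hxj : w.2 j = 0 := (hw.2.1 j).resolve_right hj
  exact ⟨hrel, j, hw.2.2.1 j hxj, hxj, fun i hij => by_contra fun hi => hmin i hi hij⟩

theorem exists_pos_of_mem_bilinearMixingSet (hε : ε < ∑ i, π i)
    {w : (ℝ × (Fin m → ℝ)) × (Fin m → ℝ)} (hw : w ∈ bilinearMixingSet h π ε) :
    ∃ j, 0 < w.2 j := by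
  obtain ⟨hrel, ⟨hint, -⟩, hnonneg, hnonpos, -⟩ := hw
  obtain ⟨i, hi⟩ := exists_ne_one_of_mem_relaxedKnapsackSet hε hrel
  have hprod : (1 - w.1.2 i) * (1 - ∑ k, w.2 k) = 0 :=
    le_antisymm (neg_nonneg.1 (hnonpos i)) (hnonneg i)
  have hsum : ∑ k, w.2 k = 1 :=
    (sub_eq_zero.1 ((mul_eq_zero.1 hprod).resolve_left (sub_ne_zero.2 hi.symm))).symm
  obtain ⟨j, -, hj⟩ := Finset.exists_ne_zero_of_sum_ne_zero (hsum.trans_ne one_ne_zero)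
  obtain ⟨n, hn⟩ := hint j
  exact ⟨j, (hn ▸ n.cast_nonneg : (0 : ℝ) ≤ w.2 j).lt_of_ne' hj⟩

theorem image_fst_bilinearMixingSet_subset_firstZeroSet (hε : ε < ∑ i, π i) :
    Prod.fst '' bilinearMixingSet h π ε ⊆ firstZeroSet h π ε := by
  rintro _ ⟨w, hw, rfl⟩
  obtain ⟨j, hj⟩ := exists_pos_of_mem_bilinearMixingSet hε hw
  obtain ⟨hrel, -, -, -, hz, hx, hlt⟩ := hw
  refine ⟨hrel, j, ?_, ?_, fun i hij => ?_⟩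
  · exact le_of_mul_le_mul_right (sub_nonneg.1 (hz j)) hj
  · exact (nonpos_of_mul_nonpos_left (neg_nonneg.1 (hx j)) hj).antisymm (hrel.2.1 j)
  · exact (hrel.2.2.1 i).antisymm
      (sub_nonpos.1 (nonpos_of_mul_nonpos_left (neg_nonneg.1 (hlt i j hij)) hj))

end FirstZero

theorem convex_setOf_BLPInequality {m l v : ℕ} (h : Fin m → ℝ) (t : Fin (l + 1) → Fin m)
    (δ : Fin l → ℝ) (q : Fin v → Fin m) (φ : Fin v → ℝ) :
    Convex ℝ {w | BLPInequality h t δ q φ w} := by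
  let f : ℝ × (Fin m → ℝ) → ℝ := fun w =>
    w.1 + ∑ ι : Fin l, (h (t ι.castSucc) - h (t ι.succ) + δ ι) * w.2 (t ι.castSucc)
      - ∑ ι, φ ι * w.2 (q ι)
  have hf : IsLinearMap ℝ f := by
    constructor
    · intro w u
      simp only [f, Prod.fst_add, Prod.snd_add, Pi.add_apply, mul_add, Finset.sum_add_distrib]
      ring
    · intro a w
      simp only [f, Prod.smul_fst, Prod.smul_snd, Pi.smul_apply, smul_eq_mul, mul_left_comm _ a,
        ← Finset.mul_sum]
      ring
  have hset : {w | BLPInequality h t δ q φ w} = {w | h (t 0) - ∑ ι, φ ι ≤ f w} := by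
    ext w
    simp only [Set.mem_ofPred_eq, BLPInequality, f, mul_sub, mul_one, Finset.sum_sub_distrib]
    constructor <;> intro hw <;> linarith
  exact hset ▸ convex_halfSpace_ge hf _

/-- The multiplier `b` stands for `m β_j`. -/
theorem BLPInequality_of_first_zero {m l v : ℕ} {h π : Fin m → ℝ} {ε : ℝ} (hπ : ∀ i, 0 ≤ π i)
    {t : Fin (l + 1) → Fin m} (ht : Monotone t) {δ : Fin l → ℝ}
    (hδ : ∀ ι, h (t ι.succ) - h (t ι.castSucc) ≤ δ ι)
    {q : Fin v → Fin m} (hq : Function.Injective q) {φ : Fin v → ℝ} (hφ : ∀ ι, 0 ≤ φ ι)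
    {j : Fin m} {A : Finset (Fin v)} (hjA : ∀ ι ∈ A, j < q ι) {b : ℝ} (hb : 0 ≤ b)
    (hA : ∀ ι ∈ A, φ ι ≤ π (q ι) * b) (hAc : ∀ ι, j < q ι → ι ∉ A → π (q ι) * b ≤ φ ι)
    (hdual : h (t ⟨countBelow t j, countBelow_lt t j⟩) - h j - ∑ ι with t ι.castSucc < j, δ ι
        - ∑ ι with q ι = j, φ ι - ∑ ι ∈ A, φ ι
      ≤ b * (∑ i ∈ Finset.Iio j, π i - ε + ∑ ι with j < q ι, π (q ι) - ∑ ι ∈ A, π (q ι)))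
    {w : ℝ × (Fin m → ℝ)} (hw : w ∈ relaxedKnapsackSet π ε) (hz : h j ≤ w.1)
    (hxj : w.2 j = 0) (hx1 : ∀ i < j, w.2 i = 1) :
    BLPInequality h t δ q φ w := by
  obtain ⟨-, hx0, hxle, hknap⟩ := hw
  have hcapacity : ∑ ι with j < q ι, π (q ι) * w.2 (q ι) ≤ ε - ∑ i ∈ Finset.Iio j, π i :=
    le_sub_iff_add_le'.2 ((sum_Iio_add_sum_filter_lt_le_sum_mul hπ hx0 hq hx1).trans hknap)
  have hcost := sum_add_mul_sub_le_sum_mul_one_sub (A := A) (s := {ι | j < q ι})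
    (fun ι hι => (Finset.mem_filter_univ ι).2 (hjA ι hι)) hb (fun ι _ => hx0 (q ι))
    (fun ι _ => hxle (q ι)) hA (fun ι hι => hAc ι ((Finset.mem_filter_univ ι).1 hι)) hcapacity
  have htpart := sub_add_sum_filter_lt_le_sum_mul ht hδ hx0 hx1
  have hqpart := sum_filter_eq_add_sum_filter_lt_le (q := q) hφ hxle hxj
  unfold BLPInequality
  linarith

theorem blp_inequality_valid_general_general {m l v : ℕ} {h π : Fin m → ℝ} {ε : ℝ}
    (hπ : ∀ i, 0 ≤ π i) (hε : ε < ∑ i, π i)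
    {t : Fin (l + 1) → Fin m} (ht : Monotone t) {δ : Fin l → ℝ}
    (hδ : ∀ ι, h (t ι.succ) - h (t ι.castSucc) ≤ δ ι)
    {q : Fin v → Fin m} (hq : Function.Injective q) {φ : Fin v → ℝ} (hφ : ∀ ι, 0 ≤ φ ι)
    {A : Fin m → Finset (Fin v)} {β : Fin m → ℝ} (hβ : ∀ j, 0 ≤ β j)
    (hA : ∀ j, ∀ ι ∈ A j, j < q ι → φ ι ≤ (m : ℝ) * π (q ι) * β j)
    (hAc : ∀ j, ∀ ι ∉ A j, j < q ι → (m : ℝ) * π (q ι) * β j ≤ φ ι)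
    (hdual : ∀ j : Fin m,
      (h (t ⟨countBelow t j, countBelow_lt t j⟩) - h j - ∑ ι with t ι.castSucc < j, δ ι
          - ∑ ι with q ι = j, φ ι - ∑ ι ∈ A j with j < q ι, φ ι) / (m : ℝ)
        ≤ β j * (∑ i ∈ Finset.Iic j, π i - π j - ε + ∑ ι with j < q ι, π (q ι)
          - ∑ ι ∈ A j with j < q ι, π (q ι))) :
    (∀ w ∈ Prod.fst '' convexHull ℝ (bilinearMixingSet h π ε), BLPInequality h t δ q φ w) ∧
      (∀ w ∈ convexHull ℝ (mixingKnapsackSet h π ε), BLPInequality h t δ q φ w) := by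
  have hvalid : firstZeroSet h π ε ⊆ {w | BLPInequality h t δ q φ w} := by
    rintro w ⟨hw, j, hz, hxj, hx1⟩
    have hm : (0 : ℝ) < m := Nat.cast_pos.2 j.pos
    have hIio : ∑ i ∈ Finset.Iic j, π i - π j = ∑ i ∈ Finset.Iio j, π i := by
      rw [← Finset.Iio_insert, Finset.sum_insert Finset.notMem_Iio_self, add_sub_cancel_left]
    refine BLPInequality_of_first_zero (A := {ι ∈ A j | j < q ι}) (b := m * β j) hπ ht hδ hq hφ
      (fun ι hι => (Finset.mem_filter.1 hι).2) (mul_nonneg hm.le (hβ j)) (fun ι hι => ?_)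
      (fun ι hjι hι => ?_) ?_ hw hz hxj hx1
    · obtain ⟨hιA, hjι⟩ := Finset.mem_filter.1 hι
      linarith [hA j ι hιA hjι]
    · linarith [hAc j ι (fun hιA => hι (Finset.mem_filter.2 ⟨hιA, hjι⟩)) hjι]
    · rw [← hIio, mul_assoc]
      exact (div_le_iff₀' hm).1 (hdual j)
  have hconvex := convex_setOf_BLPInequality h t δ q φ
  have hproj : Prod.fst '' convexHull ℝ (bilinearMixingSet h π ε)
      = convexHull ℝ (Prod.fst '' bilinearMixingSet h π ε) :=
    (LinearMap.fst ℝ (ℝ × (Fin m → ℝ)) (Fin m → ℝ)).image_convexHull _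
  rw [hproj]
  exact ⟨convexHull_min ((image_fst_bilinearMixingSet_subset_firstZeroSet hε).trans hvalid) hconvex,
    convexHull_min ((mixingKnapsackSet_subset_firstZeroSet hε).trans hvalid) hconvex⟩

/-- The list `t` has `l + 1` entries `t_1 < … < t_l < t_{l+1}` with `t_{l+1} = r + 1`, which is
the element of `Fin m` of value `r`; so `t_l ≤ r`. The condition `r ≤ (q ι).val` says
`q_ι ≥ r + 1`. The term `[j ∈ Q] φ_j` is the sum of `φ ι` over the (at most one) `ι` with
`q ι = j`. -/
theorem blp_inequality_valid_general
    (m : ℕ) (hm : 1 ≤ m)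
    (h : Fin m → ℝ) (hmono : Antitone h) (hnonneg : ∀ i, 0 ≤ h i)
    (π : Fin m → ℝ) (hπpos : ∀ i, 0 < π i) (hπsum : ∑ i, π i = 1)
    (ε : ℝ) (hε0 : 0 ≤ ε) (hε1 : ε < 1) (hπε : ∀ i, π i ≤ ε)
    (p : ℕ)
    (hp : IsGreatest {k : ℕ | 1 ≤ k ∧ k ≤ m ∧
      ∑ i ∈ Finset.univ.filter (fun i : Fin m => i.val < k), π i ≤ ε} p)
    (r : ℕ) (hr1 : 1 ≤ r) (hrp : r ≤ p)
    (l : ℕ) (hl1 : 1 ≤ l) (hlr : l ≤ r)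
    (t : Fin (l + 1) → Fin m) (ht : StrictMono t) (htop : (t (Fin.last l)).val = r)
    (δ : Fin l → ℝ)
    (hδlb : ∀ ι : Fin l, δ ι ≥ h (t ι.succ) - h (t ι.castSucc))
    (hδub : ∑ ι, δ ι ≤ h (t (Fin.last l)))
    (v : ℕ) (hv1 : 1 ≤ v) (hvub : v ≤ p - r + l)
    (q : Fin v → Fin m) (hq : StrictMono q) (hqr : ∀ ι, r ≤ (q ι).val)
    (A : Fin m → Finset (Fin v))
    (φ : Fin v → ℝ) (hφ : ∀ ι, 0 ≤ φ ι)
    (β : Fin m → ℝ) (hβ : ∀ j, 0 ≤ β j)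
    (hA : ∀ j, ∀ ι ∈ A j, j < q ι → φ ι ≤ (m : ℝ) * π (q ι) * β j)
    (hAc : ∀ j, ∀ ι ∉ A j, j < q ι → (m : ℝ) * π (q ι) * β j ≤ φ ι)
    (hβh : ∀ j : Fin m,
      β j * ((∑ i ∈ Finset.Iic j, π i) - π j - ε
          + (∑ ι ∈ Finset.univ.filter (fun ι => j < q ι), π (q ι))
          - (∑ ι ∈ (A j).filter (fun ι => j < q ι), π (q ι)))
        ≥ (h (t ⟨countBelow t j, countBelow_lt t j⟩) - h j
          - (∑ ι ∈ Finset.univ.filter (fun ι : Fin l => t ι.castSucc < j), δ ι)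
          - (∑ ι ∈ Finset.univ.filter (fun ι => q ι = j), φ ι)
          - (∑ ι ∈ (A j).filter (fun ι => j < q ι), φ ι)) / (m : ℝ)) :
    (∀ w ∈ Prod.fst '' convexHull ℝ (bilinearMixingSet h π ε), BLPInequality h t δ q φ w) ∧
      (∀ w ∈ convexHull ℝ (mixingKnapsackSet h π ε), BLPInequality h t δ q φ w) := by
  exact blp_inequality_valid_general_general (fun i => (hπpos i).le) (hε1.trans_eq hπsum.symm)
    ht.monotone hδlb hq.injective hφ hβ hA hAc hβh
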